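/- The rational solutions of y² + y = x³ + x² + x are exactly the two pairs (0, 0) and (0, −1); that is, for all x, y ∈ ℚ, y² + y = x³ + x² + x holds if and only if (x, y) = (0, 0) or (x, y) = (0, −1). In particular, this elliptic curve has only finitely many rational points (rank 0). -/

import Mathlib

/-!
The equation reads `(y - x) · (-(y + x + 1)) · 1 = (-x)³`, where the three factors add up to
`2 · (-x)`. Clearing denominators gives integers with `uvw = c³` and `u + v + w = kc`, where
`k = 2`, and a descent on `|c|` through two 3-isogenies shows `c = 0`.

If `u, v, w` have no common factor, they are cubes `X³, Y³, Z³` with `X³ + Y³ + Z³ = kXYZ`, that is,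
`(kX + 3Y + 3Z) · N(kX + 3ωY + 3ω²Z) = (k³ - 27)X³`. Modulo the prime `27 - k³ = 19` the product of
`kX + 3Y + 3Z` and its rotations `kY + 3Z + 3X` and `kZ + 3X + 3Y` vanishes, so we may assume
`19 ∣ kX + 3Y + 3Z`. Unique factorization in `ℤ` and `ℤ[ω]` then gives
`kX + 3Y + 3Z = (k³ - 27)d³` and `kX + 3ωY + 3ω²Z = α³`, so `X = d N(α)`. As `kX + 3Y + 3Z` and
the trace of `kX + 3ωY + 3ω²Z` add up to `3kX`, we get `(k³ - 27)d³ + tr(α³) = 3kd N(α)`, which is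
again of the form `uvw = d³`, `u + v + w = kd`, and `|d| ≤ |X| < |XYZ| = |c|`.
-/

theorem isCoprime_of_forall_prime_dvd {a b : ℤ} (h : ∀ p : ℤ, Prime p → p ∣ a → ¬ p ∣ b) :
    IsCoprime a b := by
  refine isCoprime_of_prime_dvd ?_ h
  rintro ⟨rfl, rfl⟩
  exact h 2 Int.prime_two (dvd_zero 2) (dvd_zero 2)

theorem not_dvd_of_isCoprime {R : Type*} [CommSemiring R] {a b p : R} (hp : Prime p)
    (h : IsCoprime a b) (ha : p ∣ a) : ¬ p ∣ b :=
  fun hb => hp.not_isUnit (h.isUnit_of_dvd' ha hb)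

theorem abs_two_mul_bmod_le (a : ℤ) {n : ℤ} (hn : 0 < n) : |2 * a.bmod n.natAbs| ≤ n := by
  have hlower := Int.le_bmod (x := a) (Int.natAbs_pos.2 hn.ne')
  have hupper := Int.bmod_lt (x := a) (Int.natAbs_pos.2 hn.ne')
  rw [abs_le]
  omega

theorem isCoprime_star_of_isCoprime_norm_trace {R : Type*} [CommRing R] {a b : R}
    {z : QuadraticAlgebra R a b} (h : IsCoprime z.norm z.trace) : IsCoprime z (star z) := by
  obtain ⟨u, v, huv⟩ := h
  have hmap := congrArg (algebraMap R (QuadraticAlgebra R a b)) huv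
  rw [map_add, map_mul, map_mul, QuadraticAlgebra.algebraMap_norm_eq_mul_star,
    QuadraticAlgebra.algebraMap_trace_eq_add_star, map_one] at hmap
  exact ⟨algebraMap _ _ v + algebraMap _ _ u * star z, algebraMap _ _ v, by
    rw [← hmap]; ring⟩

/-- The Eisenstein integers `ℤ[ω]` with `ω² = -1 - ω`; `⟨a, b⟩` stands for `a + bω`. -/
abbrev EisensteinInt := QuadraticAlgebra ℤ (-1) (-1)

namespace EisensteinInt

open QuadraticAlgebra

theorem norm_eq (z : EisensteinInt) : z.norm = z.re ^ 2 - z.re * z.im + z.im ^ 2 := by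
  rw [norm_def]; ring

theorem trace_eq (z : EisensteinInt) : z.trace = 2 * z.re - z.im := by
  rw [trace_def]; ring

theorem four_mul_norm_eq (z : EisensteinInt) : 4 * z.norm = z.trace ^ 2 + 3 * z.im ^ 2 := by
  rw [norm_eq, trace_eq]; ring

theorem norm_nonneg (z : EisensteinInt) : 0 ≤ z.norm := by
  linarith [four_mul_norm_eq z, sq_nonneg z.trace, sq_nonneg z.im]

theorem norm_pos {z : EisensteinInt} (hz : z ≠ 0) : 0 < z.norm := by
  refine (norm_nonneg z).lt_of_ne' fun h => hz ?_
  have hsum := four_mul_norm_eq z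
  have him : z.im = 0 := by
    rw [← sq_eq_zero_iff]
    linarith [sq_nonneg z.trace, sq_nonneg z.im]
  have hre : z.re = 0 := by simpa [norm_eq, him] using h
  exact QuadraticAlgebra.ext hre him

/-- Euclidean quotient: the coordinates of `x / y = x * star y / norm y`, rounded to nearest
integers. -/
def quotient (x y : EisensteinInt) : EisensteinInt :=
  ⟨(x * star y).re.bdiv y.norm.natAbs, (x * star y).im.bdiv y.norm.natAbs⟩

theorem sub_mul_quotient_mul_star (x y : EisensteinInt) :
    (x - y * quotient x y) * star y =
      ⟨(x * star y).re.bmod y.norm.natAbs, (x * star y).im.bmod y.norm.natAbs⟩ := by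
  have hN : (y.norm.natAbs : ℤ) = y.norm := Int.natAbs_of_nonneg (norm_nonneg y)
  have hsplit : (x - y * quotient x y) * star y =
      x * star y - algebraMap ℤ EisensteinInt y.norm * quotient x y := by
    rw [algebraMap_norm_eq_mul_star]; ring
  rw [hsplit]
  ext <;> simp [quotient, Int.bmod_eq_self_sub_mul_bdiv, hN]

theorem norm_sub_mul_quotient_lt (x : EisensteinInt) {y : EisensteinInt} (hy : y ≠ 0) :
    (x - y * quotient x y).norm < y.norm := by
  have hy := norm_pos hy
  set r := (x * star y).re.bmod y.norm.natAbs
  set s := (x * star y).im.bmod y.norm.natAbs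
  have hr_sq : (2 * r) ^ 2 ≤ y.norm ^ 2 :=
    sq_le_sq.2 ((abs_two_mul_bmod_le _ hy).trans (le_abs_self _))
  have hs_sq : (2 * s) ^ 2 ≤ y.norm ^ 2 :=
    sq_le_sq.2 ((abs_two_mul_bmod_le _ hy).trans (le_abs_self _))
  refine lt_of_mul_lt_mul_right ?_ hy.le
  calc (x - y * quotient x y).norm * y.norm
      = ((x - y * quotient x y) * star y).norm := by rw [map_mul, QuadraticAlgebra.norm_star]
    _ = r ^ 2 - r * s + s ^ 2 := by rw [sub_mul_quotient_mul_star, norm_eq]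
    _ < y.norm * y.norm := by nlinarith [sq_nonneg (r + s)]

instance : EuclideanDomain EisensteinInt :=
  { (inferInstance : CommRing EisensteinInt), (inferInstance : Nontrivial EisensteinInt) with
    quotient := quotient
    remainder := fun x y => x - y * quotient x y
    quotient_zero := fun x => by ext <;> simp [quotient]
    quotient_mul_add_remainder_eq := fun x y => add_sub_cancel _ x
    r := fun x y => x.norm.natAbs < y.norm.natAbs
    r_wellFounded := (measure fun z : EisensteinInt => z.norm.natAbs).wf
    remainder_lt := fun x _ hy =>
      Int.natAbs_lt_natAbs_of_nonneg_of_lt (norm_nonneg _) (norm_sub_mul_quotient_lt x hy)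
    mul_left_not_lt := fun x y hy => by
      rw [map_mul, Int.natAbs_mul, not_lt]
      exact Nat.le_mul_of_pos_right _ (Int.natAbs_pos.2 (norm_pos hy).ne') }

theorem eq_one_or_eq_neg_one_of_isUnit {w : EisensteinInt} (hw : IsUnit w) (h3 : 3 ∣ w.im) :
    w = 1 ∨ w = -1 := by
  have hnorm : w.norm = 1 :=
    (Int.isUnit_iff.1 (isUnit_iff_norm_isUnit.1 hw)).resolve_right (by linarith [norm_nonneg w])
  have hsum := four_mul_norm_eq w
  have him : w.im = 0 := by
    obtain ⟨n, hn⟩ := h3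
    rw [hnorm, hn] at hsum
    have hn0 : n = 0 := by
      have : n ^ 2 < 1 := by linarith [sq_nonneg w.trace]
      rw [← sq_eq_zero_iff]
      linarith [sq_nonneg n]
    rw [hn, hn0, mul_zero]
  have hre : w.re ^ 2 = 1 := by simpa [norm_eq, him] using hnorm
  exact (sq_eq_one_iff.1 hre).imp (QuadraticAlgebra.ext · him)
    (QuadraticAlgebra.ext · (by rw [him]; rfl))

theorem three_dvd_im_cube (z : EisensteinInt) : 3 ∣ (z ^ 3).im :=
  ⟨z.re * z.im * (z.re - z.im), by
    simp only [pow_succ, pow_zero, one_mul, re_mul, im_mul]; ring⟩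

theorem not_three_dvd_re {z : EisensteinInt} (hz : IsCoprime z.norm z.trace) (him : 3 ∣ z.im) :
    ¬ 3 ∣ z.re := by
  intro hre
  refine Int.prime_three.not_isUnit (hz.isUnit_of_dvd' ?_ ?_)
  · rw [norm_eq]
    exact ((hre.pow two_ne_zero).sub (hre.mul_right _)).add (him.pow two_ne_zero)
  · rw [trace_eq]
    exact (hre.mul_left 2).sub him

/-- Cubes in `ℤ[ω]` have `ω`-coordinate divisible by `3`, which excludes the units other than `±1`
in the factorization of `z`. -/
theorem exists_eq_cube {z : EisensteinInt} {l x : ℤ} (h : z.norm * l = x ^ 3)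
    (htrace : IsCoprime z.norm z.trace) (hl : IsCoprime z.norm l) (him : 3 ∣ z.im) :
    ∃ (α : EisensteinInt) (c : ℤ), z = α ^ 3 ∧ l = c ^ 3 := by
  obtain ⟨⟨d, hd⟩, ⟨c, hc⟩⟩ := Int.eq_pow_of_mul_eq_pow_odd hl (by decide) h
  have hz : z * star z = algebraMap ℤ EisensteinInt d ^ 3 := by
    rw [← algebraMap_norm_eq_mul_star, hd, map_pow]
  obtain ⟨α, w, hw⟩ :=
    exists_associated_pow_of_mul_eq_pow' (isCoprime_star_of_isCoprime_norm_trace htrace) hz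
  obtain ⟨n, hn⟩ := three_dvd_im_cube α
  have hre : z.re = (α ^ 3).re * w.val.re - 3 * (n * w.val.im) := by
    rw [← hw, re_mul, hn]; ring
  have him' : z.im = (α ^ 3).re * w.val.im + 3 * (n * (w.val.re - w.val.im)) := by
    rw [← hw, im_mul, hn]; ring
  have hdvd : 3 ∣ (α ^ 3).re * w.val.im := by omega
  have hndvd : ¬ 3 ∣ (α ^ 3).re := by
    intro ⟨m, hm⟩
    exact not_three_dvd_re htrace him ⟨m * w.val.re - n * w.val.im, by rw [hre, hm]; ring⟩
  have hw3 : 3 ∣ w.val.im := (Int.prime_three.dvd_or_dvd hdvd).resolve_left hndvd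
  rcases eq_one_or_eq_neg_one_of_isUnit w.isUnit hw3 with h1 | h1
  · exact ⟨α, c, by rw [← hw, h1, mul_one], hc⟩
  · exact ⟨-α, c, by rw [← hw, h1]; ring, hc⟩

end EisensteinInt

theorem not_three_dvd_cube_sub_twenty_seven {k : ℤ} (hk : ¬ 3 ∣ k) : ¬ 3 ∣ k ^ 3 - 27 := fun h =>
  hk (Int.prime_three.dvd_of_dvd_pow ((dvd_sub_left (by norm_num)).1 h))

theorem cube_sub_twenty_seven_ne_zero {k : ℤ} (hk : ¬ 3 ∣ k) : k ^ 3 - 27 ≠ 0 := fun h =>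
  not_three_dvd_cube_sub_twenty_seven hk (h ▸ dvd_zero 3)

/-- `(X : Y : Z)` is a point of the Hesse cubic `X³ + Y³ + Z³ = kXYZ` in coprime coordinates. -/
structure IsHesse (k X Y Z : ℤ) : Prop where
  eq : X ^ 3 + Y ^ 3 + Z ^ 3 = k * X * Y * Z
  isCoprime_XY : IsCoprime X Y
  isCoprime_YZ : IsCoprime Y Z
  isCoprime_ZX : IsCoprime Z X

theorem isCoprime_of_mul_eq_cube {k u v w c : ℤ} (hprod : u * v * w = c ^ 3)
    (hsum : u + v + w = k * c) (hprim : ∀ p : ℤ, Prime p → p ∣ u → p ∣ v → ¬ p ∣ w) :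
    IsCoprime u v :=
  isCoprime_of_forall_prime_dvd fun p hp hu hv => by
    have hc : p ∣ c := hp.dvd_of_dvd_pow (hprod ▸ (hu.mul_right v).mul_right w)
    refine hprim p hp hu hv ?_
    rw [← add_sub_cancel_left (u + v) w, hsum]
    exact (hc.mul_left k).sub (hu.add hv)

theorem exists_isHesse_of_mul_eq_cube {k u v w c : ℤ} (hprod : u * v * w = c ^ 3)
    (hsum : u + v + w = k * c) (hprim : ∀ p : ℤ, Prime p → p ∣ u → p ∣ v → ¬ p ∣ w) :
    ∃ X Y Z : ℤ, IsHesse k X Y Z ∧ X * Y * Z = c := by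
  have huv : IsCoprime u v := isCoprime_of_mul_eq_cube hprod hsum hprim
  have hvw : IsCoprime v w := isCoprime_of_mul_eq_cube (by rw [← hprod]; ring)
    (by rw [← hsum]; ring) fun p hp hv hw hu => hprim p hp hu hv hw
  have hwu : IsCoprime w u := isCoprime_of_mul_eq_cube (by rw [← hprod]; ring)
    (by rw [← hsum]; ring) fun p hp hw hu hv => hprim p hp hu hv hw
  have h3 : Odd 3 := by decide
  obtain ⟨⟨T, hT⟩, Z, rfl⟩ := Int.eq_pow_of_mul_eq_pow_odd (hwu.symm.mul_left hvw) h3 hprod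
  obtain ⟨⟨X, rfl⟩, Y, rfl⟩ := Int.eq_pow_of_mul_eq_pow_odd huv h3 hT
  have hc : X * Y * Z = c := h3.pow_inj.1 (by rw [← hprod]; ring)
  refine ⟨X, Y, Z, ⟨?_, ?_, ?_, ?_⟩, hc⟩
  · rw [hsum, ← hc]; ring
  all_goals rwa [IsCoprime.pow_iff three_pos three_pos] at huv hvw hwu

namespace IsHesse

variable {k X Y Z : ℤ}

theorem rotate (h : IsHesse k X Y Z) : IsHesse k Y Z X where
  eq := by linear_combination h.eq
  isCoprime_XY := h.isCoprime_YZ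
  isCoprime_YZ := h.isCoprime_ZX
  isCoprime_ZX := h.isCoprime_XY

/-- The linear form `kX + 3ωY + 3ω²Z`, whose norm times `kX + 3Y + 3Z` is `(k³ - 27)X³` on the Hesse
cubic; here `ω² = -1 - ω` is substituted to obtain the coordinates. -/
def linearForm (k X Y Z : ℤ) : EisensteinInt :=
  ⟨k * X - 3 * Z, 3 * (Y - Z)⟩

theorem trace_linearForm (k X Y Z : ℤ) :
    (linearForm k X Y Z).trace + (k * X + 3 * Y + 3 * Z) = 3 * k * X := by
  rw [EisensteinInt.trace_eq, linearForm]; ring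

/-- This is `x³ + y³ + z³ - 3xyz = (x + y + z)(x + ωy + ω²z)(x + ω²y + ωz)` with
`(x, y, z) = (kX, 3Y, 3Z)`. -/
theorem norm_linearForm_mul (h : IsHesse k X Y Z) :
    (linearForm k X Y Z).norm * (k * X + 3 * Y + 3 * Z) = (k ^ 3 - 27) * X ^ 3 := by
  rw [EisensteinInt.norm_eq, linearForm]
  linear_combination 27 * h.eq

theorem not_dvd_of_dvd_norm_linearForm {p : ℤ} (h : IsCoprime Z X) (hp : Prime p)
    (hX : ¬ 3 ∣ X) (hpX : p ∣ X) (hpn : p ∣ (linearForm k X Y Z).norm) : ¬ p ∣ 3 * (Y + Z) := by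
  have hp3 : ¬ p ∣ 3 := fun h3 =>
    hX ((hp.associated_of_dvd Int.prime_three h3).dvd'.trans hpX)
  intro hYZ
  have hZ : p ∣ 3 * (3 * Z) ^ 2 := by
    have hnorm : 3 * (3 * Z) ^ 2 = (linearForm k X Y Z).norm - 3 * (Y + Z) * (3 * (Y - 2 * Z)) -
        X * (k * (k * X - 3 * Y - 3 * Z)) := by
      rw [EisensteinInt.norm_eq, linearForm]; ring
    rw [hnorm]
    exact (hpn.sub (hYZ.mul_right _)).sub (hpX.mul_right _)
  refine not_dvd_of_isCoprime hp h ?_ hpX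
  exact (hp.dvd_or_dvd (hp.dvd_of_dvd_pow ((hp.dvd_or_dvd hZ).resolve_left hp3))).resolve_left hp3

theorem exists_linearForm_eq_cube_of_not_three_dvd (h : IsHesse k X Y Z) (hk : ¬ 3 ∣ k)
    (hdvd : k ^ 3 - 27 ∣ k * X + 3 * Y + 3 * Z) (hX : ¬ 3 ∣ X) :
    ∃ (α : EisensteinInt) (c : ℤ), linearForm k X Y Z = α ^ 3 ∧
      k * X + 3 * Y + 3 * Z = (k ^ 3 - 27) * c ^ 3 := by
  obtain ⟨l, hl⟩ := hdvd
  have hnorm : (linearForm k X Y Z).norm * l = X ^ 3 :=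
    mul_left_cancel₀ (cube_sub_twenty_seven_ne_zero hk) (by
      linear_combination h.norm_linearForm_mul - (linearForm k X Y Z).norm * hl)
  have hpX {p : ℤ} (hp : Prime p) (hpn : p ∣ (linearForm k X Y Z).norm) : p ∣ X :=
    hp.dvd_of_dvd_pow (hnorm ▸ hpn.mul_right l)
  have htrace : IsCoprime (linearForm k X Y Z).norm (linearForm k X Y Z).trace :=
    isCoprime_of_forall_prime_dvd fun p hp hpn hpt => by
      refine not_dvd_of_dvd_norm_linearForm h.isCoprime_ZX hp hX (hpX hp hpn) hpn ?_
      have hYZ : 3 * (Y + Z) = X * (2 * k) - (linearForm k X Y Z).trace := by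
        linear_combination trace_linearForm k X Y Z
      rw [hYZ]
      exact ((hpX hp hpn).mul_right _).sub hpt
  have hl' : IsCoprime (linearForm k X Y Z).norm l :=
    isCoprime_of_forall_prime_dvd fun p hp hpn hpl => by
      refine not_dvd_of_dvd_norm_linearForm h.isCoprime_ZX hp hX (hpX hp hpn) hpn ?_
      have hYZ : 3 * (Y + Z) = (k ^ 3 - 27) * l - k * X := by rw [← hl]; ring
      rw [hYZ]
      exact (hpl.mul_left _).sub ((hpX hp hpn).mul_left _)
  obtain ⟨α, c, hα, rfl⟩ :=
    EisensteinInt.exists_eq_cube hnorm htrace hl' (dvd_mul_right 3 (Y - Z))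
  exact ⟨α, c, hα, hl⟩

theorem exists_eq_nine_mul (h : IsHesse k X Y Z) (hk : ¬ 3 ∣ k) (hX : 3 ∣ X) :
    ∃ x n : ℤ, X = 9 * x ∧ Y = 9 * n - 3 * k * x - Z := by
  have hYZ : ¬ 3 ∣ Y * Z := Int.prime_three.not_dvd_mul
    (not_dvd_of_isCoprime Int.prime_three h.isCoprime_XY hX)
    (not_dvd_of_isCoprime Int.prime_three h.isCoprime_ZX.symm hX)
  obtain ⟨t, rfl⟩ := hX
  obtain ⟨m, hm⟩ : 3 ∣ Y + Z := by
    refine Int.prime_three.dvd_of_dvd_pow (n := 3) ?_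
    exact ⟨k * t * Y * Z - 9 * t ^ 3 + Y * Z * (Y + Z), by linear_combination h.eq⟩
  obtain ⟨x, rfl⟩ : 3 ∣ t := by
    have hdvd : 3 ∣ k * t * (Y * Z) :=
      ⟨3 * t ^ 3 + 3 * m ^ 3 - m * (Y * Z), mul_left_cancel₀ three_ne_zero (by
        linear_combination ((Y + Z) ^ 2 + 3 * m * (Y + Z) + 9 * m ^ 2 - 3 * Y * Z) * hm - h.eq)⟩
    have hkt : 3 ∣ k * t := (Int.prime_three.dvd_or_dvd hdvd).resolve_right hYZ
    exact (Int.prime_three.dvd_or_dvd hkt).resolve_left hk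
  obtain ⟨n, hn⟩ : 3 ∣ k * x + m := by
    have hdvd : 3 ∣ (k * x + m) * (Y * Z) :=
      ⟨27 * x ^ 3 + m ^ 3, mul_left_cancel₀ (show (9 : ℤ) ≠ 0 by norm_num) (by
        linear_combination ((Y + Z) ^ 2 + 3 * m * (Y + Z) + 9 * m ^ 2 - 3 * Y * Z) * hm - h.eq)⟩
    exact (Int.prime_three.dvd_or_dvd hdvd).resolve_right hYZ
  exact ⟨x, n, by ring, by linear_combination hm + 3 * hn⟩

/-- The quotient of `linearForm k X Y Z` by `(√-3)³`, where `√-3 = 1 + 2ω`, in the case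
`X = 9x` and `Y = 9n - 3kx - Z`. -/
def reducedForm (k x n Z : ℤ) : EisensteinInt :=
  ⟨3 * k * x + Z - 6 * n, 3 * (k * x - n)⟩

theorem linearForm_eq_mul_reducedForm (k x n Z : ℤ) :
    linearForm k (9 * x) (9 * n - 3 * k * x - Z) Z = ⟨1, 2⟩ ^ 3 * reducedForm k x n Z := by
  ext <;> simp only [linearForm, reducedForm, pow_succ, pow_zero, one_mul,
    QuadraticAlgebra.re_mul, QuadraticAlgebra.im_mul] <;> ring

theorem not_dvd_of_dvd_norm_reducedForm {p x n : ℤ} (h : IsCoprime x Z) (hp : Prime p)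
    (hpx : p ∣ x) (hpn : p ∣ (reducedForm k x n Z).norm) : ¬ p ∣ 3 * n := by
  intro hn
  refine not_dvd_of_isCoprime hp h hpx (hp.dvd_of_dvd_pow (n := 2) ?_)
  have hnorm : Z ^ 2 = (reducedForm k x n Z).norm - 3 * n * (9 * n - 3 * Z) -
      x * (3 * k * (3 * k * x + Z - 9 * n)) := by
    rw [EisensteinInt.norm_eq, reducedForm]; ring
  rw [hnorm]
  exact (hpn.sub (hn.mul_right _)).sub (hpx.mul_right _)

theorem exists_reducedForm_eq_cube {x l : ℤ} (h : IsCoprime x Z)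
    (hnorm : (reducedForm k x ((k ^ 3 - 27) * l) Z).norm * l = x ^ 3) :
    ∃ (α : EisensteinInt) (c : ℤ), reducedForm k x ((k ^ 3 - 27) * l) Z = α ^ 3 ∧ l = c ^ 3 := by
  set n := (k ^ 3 - 27) * l
  have hpx {p : ℤ} (hp : Prime p) (hpn : p ∣ (reducedForm k x n Z).norm) : p ∣ x :=
    hp.dvd_of_dvd_pow (hnorm ▸ hpn.mul_right l)
  have htrace : IsCoprime (reducedForm k x n Z).norm (reducedForm k x n Z).trace :=
    isCoprime_of_forall_prime_dvd fun p hp hpn hpt => by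
      have hsq : p ∣ (9 * (k * x - n)) ^ 2 := by
        have hsum : (9 * (k * x - n)) ^ 2 = (reducedForm k x n Z).norm * 12 -
            (reducedForm k x n Z).trace * (3 * (reducedForm k x n Z).trace) := by
          rw [EisensteinInt.norm_eq, EisensteinInt.trace_eq, reducedForm]; ring
        rw [hsum]
        exact (hpn.mul_right _).sub (hpt.mul_right _)
      have hn : p ∣ 3 * (3 * n) := by
        have hsub : 3 * (3 * n) = x * (9 * k) - 9 * (k * x - n) := by ring
        rw [hsub]
        exact ((hpx hp hpn).mul_right _).sub (hp.dvd_of_dvd_pow hsq)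
      exact not_dvd_of_dvd_norm_reducedForm h hp (hpx hp hpn) hpn
        ((hp.dvd_or_dvd hn).elim (·.mul_right n) id)
  have hl : IsCoprime (reducedForm k x n Z).norm l :=
    isCoprime_of_forall_prime_dvd fun p hp hpn hpl =>
      not_dvd_of_dvd_norm_reducedForm h hp (hpx hp hpn) hpn ((hpl.mul_left _).mul_left 3)
  exact EisensteinInt.exists_eq_cube hnorm htrace hl (dvd_mul_right 3 (k * x - n))

theorem exists_linearForm_eq_cube_of_three_dvd (h : IsHesse k X Y Z) (hk : ¬ 3 ∣ k)
    (hdvd : k ^ 3 - 27 ∣ k * X + 3 * Y + 3 * Z) (hX : 3 ∣ X) :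
    ∃ (α : EisensteinInt) (c : ℤ), linearForm k X Y Z = α ^ 3 ∧
      k * X + 3 * Y + 3 * Z = (k ^ 3 - 27) * c ^ 3 := by
  obtain ⟨x, n, rfl, rfl⟩ := h.exists_eq_nine_mul hk hX
  have hcop : IsCoprime (k ^ 3 - 27) (3 ^ 3) :=
    (Int.prime_three.coprime_iff_not_dvd.2 (not_three_dvd_cube_sub_twenty_seven hk)).symm.pow_right
  have hA : k * (9 * x) + 3 * (9 * n - 3 * k * x - Z) + 3 * Z = 3 ^ 3 * n := by ring
  obtain ⟨l, rfl⟩ : k ^ 3 - 27 ∣ n := hcop.dvd_of_dvd_mul_left (hA ▸ hdvd)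
  have hnorm : (reducedForm k x ((k ^ 3 - 27) * l) Z).norm * l = x ^ 3 := by
    have hmul := h.norm_linearForm_mul
    rw [linearForm_eq_mul_reducedForm, map_mul, map_pow, EisensteinInt.norm_eq ⟨1, 2⟩] at hmul
    refine mul_left_cancel₀ (cube_sub_twenty_seven_ne_zero hk)
      (mul_left_cancel₀ (pow_ne_zero 6 three_ne_zero) ?_)
    linear_combination hmul
  obtain ⟨α, c, hα, rfl⟩ := exists_reducedForm_eq_cube
    h.isCoprime_ZX.of_mul_right_right.symm hnorm
  exact ⟨⟨1, 2⟩ * α, 3 * c, by rw [linearForm_eq_mul_reducedForm, hα, mul_pow], by ring⟩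

theorem exists_linearForm_eq_cube (h : IsHesse k X Y Z) (hk : ¬ 3 ∣ k)
    (hdvd : k ^ 3 - 27 ∣ k * X + 3 * Y + 3 * Z) :
    ∃ (α : EisensteinInt) (c : ℤ), linearForm k X Y Z = α ^ 3 ∧
      k * X + 3 * Y + 3 * Z = (k ^ 3 - 27) * c ^ 3 := by
  by_cases hX : 3 ∣ X
  · exact h.exists_linearForm_eq_cube_of_three_dvd hk hdvd hX
  · exact h.exists_linearForm_eq_cube_of_not_three_dvd hk hdvd hX

end IsHesse

/-- The triple is `(kc + tr(ωⁱα)) / 3` for `i = 0, 1, 2`. -/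
theorem EisensteinInt.exists_mul_eq_cube_of_trace_cube {k c : ℤ} {α : EisensteinInt}
    (h : (α ^ 3).trace + (k ^ 3 - 27) * c ^ 3 = 3 * k * (c * α.norm)) :
    ∃ u v w : ℤ, u * v * w = c ^ 3 ∧ u + v + w = k * c := by
  obtain ⟨a, b⟩ := α
  have h' : 2 * a ^ 3 - 3 * a ^ 2 * b - 3 * a * b ^ 2 + 2 * b ^ 3 + (k ^ 3 - 27) * c ^ 3 =
      3 * k * (c * (a ^ 2 - a * b + b ^ 2)) := by
    simp only [norm_eq, trace_eq, pow_succ, pow_zero, one_mul, QuadraticAlgebra.re_mul,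
      QuadraticAlgebra.im_mul] at h
    linear_combination h
  obtain ⟨v, hv⟩ : 3 ∣ k * c - a - b := by
    refine Int.prime_three.dvd_of_dvd_pow (n := 3) ?_
    exact ⟨k * c * (a ^ 2 - a * b + b ^ 2) + 9 * c ^ 3 - k ^ 2 * c ^ 2 * (a + b) +
      k * c * (a + b) ^ 2 - a ^ 3 - b ^ 3, by linear_combination h'⟩
  refine ⟨v + a, v, v + b, ?_, by linear_combination -hv⟩
  have hb : b = k * c - a - 3 * v := by linarith
  subst hb
  refine mul_left_cancel₀ (show (27 : ℤ) ≠ 0 by norm_num) ?_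
  linear_combination h'

namespace IsHesse

theorem exists_mul_eq_cube {k X Y Z : ℤ} (h : IsHesse k X Y Z) (hk : ¬ 3 ∣ k)
    (hdvd : k ^ 3 - 27 ∣ k * X + 3 * Y + 3 * Z) :
    ∃ u v w c : ℤ, c ∣ X ∧ u * v * w = c ^ 3 ∧ u + v + w = k * c := by
  obtain ⟨α, c, hα, hc⟩ := h.exists_linearForm_eq_cube hk hdvd
  have hX : c * α.norm = X := by
    have hmul := h.norm_linearForm_mul
    rw [hα, map_pow, hc] at hmul
    refine (show Odd 3 by decide).pow_inj.1 (mul_left_cancel₀ (cube_sub_twenty_seven_ne_zero hk) ?_)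
    linear_combination hmul
  have htrace := trace_linearForm k X Y Z
  rw [hα, hc, ← hX] at htrace
  obtain ⟨u, v, w, hprod, hsum⟩ := EisensteinInt.exists_mul_eq_cube_of_trace_cube htrace
  exact ⟨u, v, w, c, hX ▸ dvd_mul_right c _, hprod, hsum⟩

variable {X Y Z : ℤ}

theorem nineteen_dvd_or (h : IsHesse 2 X Y Z) :
    19 ∣ 2 * X + 3 * Y + 3 * Z ∨ 19 ∣ 2 * Y + 3 * Z + 3 * X ∨ 19 ∣ 2 * Z + 3 * X + 3 * Y := by
  have h19 : Prime (19 : ℤ) := Int.prime_iff_natAbs_prime.2 (by norm_num)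
  have hdvd : 19 ∣ (2 * X + 3 * Y + 3 * Z) *
      ((2 * Y + 3 * Z + 3 * X) * (2 * Z + 3 * X + 3 * Y)) :=
    ⟨3 * ((X + Y) * (Y + Z) * (Z + X)) + 2 * X * Y * Z, by linear_combination 18 * h.eq⟩
  exact (h19.dvd_or_dvd hdvd).imp_right h19.dvd_or_dvd

theorem one_lt_abs_mul (h : IsHesse 2 X Y Z) (h0 : X * Y * Z ≠ 0) : 1 < |Y * Z| := by
  have hYZ : Y * Z ≠ 0 := right_ne_zero_of_mul (mul_assoc X Y Z ▸ h0)
  refine (Int.one_le_abs hYZ).lt_of_ne' fun habs => ?_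
  have hunit : IsUnit (Y * Z) := Int.isUnit_iff_abs_eq.2 habs
  have heq := h.eq
  rcases Int.isUnit_eq_or_eq_neg (isUnit_of_mul_isUnit_left hunit)
    (isUnit_of_mul_isUnit_right hunit) with rfl | rfl
  · obtain ⟨t, rfl⟩ : 2 ∣ X := Int.prime_two.dvd_of_dvd_pow (n := 3)
      ⟨X * Y ^ 2 - Y ^ 3, by linear_combination heq⟩
    have hY : 2 ∣ Y := Int.prime_two.dvd_of_dvd_pow (n := 3)
      ⟨t * Y ^ 2 - 2 * t ^ 3, mul_left_cancel₀ two_ne_zero (by linear_combination heq)⟩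
    exact not_dvd_of_isCoprime Int.prime_two h.isCoprime_XY (dvd_mul_right 2 t) hY
  · have hmul : X * (X ^ 2 + 2 * Z ^ 2) = 0 := by linear_combination heq
    have hZ : Z ≠ 0 := right_ne_zero_of_mul hYZ
    have hX : X = 0 := (mul_eq_zero.1 hmul).resolve_right (by positivity)
    simp [hX] at h0

theorem exists_descent_of_dvd (h : IsHesse 2 X Y Z) (h0 : X * Y * Z ≠ 0)
    (hdvd : 19 ∣ 2 * X + 3 * Y + 3 * Z) :
    ∃ u v w c : ℤ, c ≠ 0 ∧ u * v * w = c ^ 3 ∧ u + v + w = 2 * c ∧ |c| < |X * Y * Z| := by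
  obtain ⟨u, v, w, c, hc, hprod, hsum⟩ := h.exists_mul_eq_cube (by norm_num) (by simpa using hdvd)
  have hX : X ≠ 0 := left_ne_zero_of_mul (left_ne_zero_of_mul h0)
  refine ⟨u, v, w, c, ne_zero_of_dvd_ne_zero hX hc, hprod, hsum, ?_⟩
  calc |c| ≤ |X| := Int.le_of_dvd (abs_pos.2 hX) ((abs_dvd_abs c X).2 hc)
    _ < |X| * |Y * Z| := lt_mul_of_one_lt_right (abs_pos.2 hX) (h.one_lt_abs_mul h0)
    _ = |X * Y * Z| := by rw [← abs_mul, mul_assoc]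

theorem exists_descent (h : IsHesse 2 X Y Z) (h0 : X * Y * Z ≠ 0) :
    ∃ u v w c : ℤ, c ≠ 0 ∧ u * v * w = c ^ 3 ∧ u + v + w = 2 * c ∧ |c| < |X * Y * Z| := by
  have hYZX : Y * Z * X = X * Y * Z := by ring
  have hZXY : Z * X * Y = X * Y * Z := by ring
  rcases h.nineteen_dvd_or with hdvd | hdvd | hdvd
  · exact h.exists_descent_of_dvd h0 hdvd
  · exact hYZX ▸ h.rotate.exists_descent_of_dvd (hYZX ▸ h0) hdvd
  · exact hZXY ▸ h.rotate.rotate.exists_descent_of_dvd (hZXY ▸ h0) hdvd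

end IsHesse

theorem eq_zero_of_mul_eq_cube {u v w c : ℤ} (hprod : u * v * w = c ^ 3)
    (hsum : u + v + w = 2 * c) : c = 0 := by
  induction hn : c.natAbs using Nat.strong_induction_on generalizing u v w c with
  | _ n ih =>
  subst hn
  by_contra hc
  by_cases hprim : ∀ p : ℤ, Prime p → p ∣ u → p ∣ v → ¬ p ∣ w
  · obtain ⟨X, Y, Z, hH, rfl⟩ := exists_isHesse_of_mul_eq_cube hprod hsum hprim
    obtain ⟨u', v', w', c', hc', hprod', hsum', hlt⟩ := hH.exists_descent hc
    exact hc' (ih _ (by zify; exact hlt) hprod' hsum' rfl)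
  · push Not at hprim
    obtain ⟨p, hp, ⟨u, rfl⟩, ⟨v, rfl⟩, ⟨w, rfl⟩⟩ := hprim
    obtain ⟨c, rfl⟩ : p ∣ c := by
      rw [← Int.pow_dvd_pow_iff three_ne_zero, ← hprod]
      exact ⟨u * v * w, by ring⟩
    have hc' : c ≠ 0 := right_ne_zero_of_mul hc
    refine hc' (ih _ ?_ (u := u) (v := v) (w := w) (mul_left_cancel₀ (pow_ne_zero 3 hp.ne_zero) ?_)
      (mul_left_cancel₀ hp.ne_zero ?_) rfl)
    · rw [Int.natAbs_mul]
      exact lt_mul_of_one_lt_left (Int.natAbs_pos.2 hc') (Int.prime_iff_natAbs_prime.1 hp).one_lt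
    · linear_combination hprod
    · linear_combination hsum

theorem exists_common_den (x y : ℚ) : ∃ a b d : ℤ, d ≠ 0 ∧ d * x = a ∧ d * y = b := by
  have hx : (x.den : ℚ) * x = x.num := Rat.den_mul_eq_num x
  have hy : (y.den : ℚ) * y = y.num := Rat.den_mul_eq_num y
  refine ⟨x.num * y.den, x.den * y.num, x.den * y.den, by simp, ?_, ?_⟩
  · push_cast; rw [← hx]; ring
  · push_cast; rw [← hy]; ring

theorem eq_zero_of_weierstrass_eq {x y : ℚ} (h : y ^ 2 + y = x ^ 3 + x ^ 2 + x) : x = 0 := by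
  obtain ⟨a, b, d, hd, hx, hy⟩ := exists_common_den x y
  have hprod : (b - a) * -(b + a + d) * d = (-a) ^ 3 := by
    rw [← Int.cast_inj (α := ℚ)]
    push_cast
    rw [← hx, ← hy]
    linear_combination -(d : ℚ) ^ 3 * h
  have ha : -a = 0 := eq_zero_of_mul_eq_cube hprod (by ring)
  rw [neg_eq_zero.1 ha, Int.cast_zero] at hx
  exact (mul_eq_zero.1 hx).resolve_left (Int.cast_ne_zero.2 hd)

/-- The rational solutions of `y² + y = x³ + x² + x` are exactly `(0, 0)` and `(0, −1)`;
in particular this elliptic curve has only finitely many rational points. -/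
theorem rational_points_rank_zero_curve :
    (∀ x y : ℚ, y ^ 2 + y = x ^ 3 + x ^ 2 + x ↔ (x, y) = (0, 0) ∨ (x, y) = (0, -1)) ∧
    {p : ℚ × ℚ | p.2 ^ 2 + p.2 = p.1 ^ 3 + p.1 ^ 2 + p.1}.Finite := by
  have hpoints (x y : ℚ) :
      y ^ 2 + y = x ^ 3 + x ^ 2 + x ↔ (x, y) = (0, 0) ∨ (x, y) = (0, -1) := by
    constructor
    · intro h
      obtain rfl := eq_zero_of_weierstrass_eq h
      have hy : y * (y + 1) = 0 := by linear_combination h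
      simpa [eq_neg_iff_add_eq_zero] using hy
    · rintro (h | h) <;> obtain ⟨rfl, rfl⟩ := Prod.mk.inj h <;> norm_num
  exact ⟨hpoints, (Set.toFinite {(0, 0), (0, -1)}).subset fun p hp => (hpoints p.1 p.2).1 hp⟩
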